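/- (Corollary 1, massive-MIMO limit formula.) Let N ≥ 1 be a natural number, ρ > 0 the total transmit power, σ² > 0 the CSI-difference variance, and let S = N·I be N times the N×N complex identity matrix. Set the per-antenna SNR γ = ρ/N and the equivalent SNR γ_e = γ/(Nσ²γ + 1). Then the relative capacity loss satisfies 1 − Real.log((det(I + γ_e·S)).re) / Real.log((det(I + γ·S)).re) = 1 − Real.log(1 + ρ/(ρσ² + 1)) / Real.log(1 + ρ), a constant independent of N; indeed det(I + γ·S) = (1 + ρ)^N and det(I + γ_e·S) = (1 + ρ/(ρσ² + 1))^N. -/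

import Mathlib

/-!
A scalar Gram matrix `S = c • 1` turns the channel into parallel scalar channels, each of SNR
`t * c` when the per-antenna SNR is `t`. The CSI difference acts on that product alone, as
`x ↦ x / (x * σ² + 1)`, and the number of parallel channels multiplies both capacities, so it
cancels in their ratio.
-/

section

open Matrix

variable {n : Type*} [Fintype n] [DecidableEq n]

/-- The capacity, in nats, of a channel with normalized Gram matrix `S` at per-antenna SNR `t`.
The determinant is real for Hermitian `S`; taking its real part makes the definition total. -/
noncomputable def channelCapacity (S : Matrix n n ℂ) (t : ℝ) : ℝ :=
  Real.log (det (1 + (t : ℂ) • S)).re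

/-- The fraction of the capacity at SNR `γ` that is lost when the SNR degrades to `γe`. -/
noncomputable def relativeCapacityLoss (S : Matrix n n ℂ) (γ γe : ℝ) : ℝ :=
  1 - channelCapacity S γe / channelCapacity S γ

/-- The equivalent SNR `γₑ` under a CSI difference of variance `σ2`, where `γ` is the per-antenna
SNR. The number of antennas is encoded as a real parameter `c`, the scale of the Gram matrix. -/
noncomputable def equivalentSNR (c σ2 γ : ℝ) : ℝ :=
  γ / (c * σ2 * γ + 1)

theorem equivalentSNR_mul (c σ2 γ : ℝ) :
    equivalentSNR c σ2 γ * c = γ * c / (γ * c * σ2 + 1) := by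
  rw [equivalentSNR, div_mul_eq_mul_div, show c * σ2 * γ = γ * c * σ2 by ring]

theorem det_one_add_smul_smul_one {R : Type*} [CommRing R] (t c : R) :
    det (1 + t • c • (1 : Matrix n n R)) = (1 + t * c) ^ Fintype.card n := by
  have h_scalar : 1 + t • c • (1 : Matrix n n R) = (1 + t * c) • (1 : Matrix n n R) := by
    rw [smul_smul, add_smul, one_smul]
  rw [h_scalar, det_smul, det_one, mul_one]

theorem det_one_add_ofReal_smul_smul_one (t c : ℝ) :
    det (1 + (t : ℂ) • (c : ℂ) • (1 : Matrix n n ℂ)) =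
      ((1 + t * c : ℝ) : ℂ) ^ Fintype.card n := by
  rw [det_one_add_smul_smul_one]
  push_cast
  rfl

theorem channelCapacity_smul_one (c t : ℝ) :
    channelCapacity ((c : ℂ) • (1 : Matrix n n ℂ)) t =
      Fintype.card n * Real.log (1 + t * c) := by
  rw [channelCapacity, det_one_add_ofReal_smul_smul_one, ← Complex.ofReal_pow,
    Complex.ofReal_re, Real.log_pow]

theorem relativeCapacityLoss_smul_one [Nonempty n] (c γ γe : ℝ) :
    relativeCapacityLoss ((c : ℂ) • (1 : Matrix n n ℂ)) γ γe =
      1 - Real.log (1 + γe * c) / Real.log (1 + γ * c) := by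
  have h_card : (Fintype.card n : ℝ) ≠ 0 := Nat.cast_ne_zero.mpr Fintype.card_ne_zero
  rw [relativeCapacityLoss, channelCapacity_smul_one, channelCapacity_smul_one,
    mul_div_mul_left _ _ h_card]

end

/-- Corollary 1, massive-MIMO limit formula: with `S = N • I`, per-antenna SNR
`γ = ρ/N` and equivalent SNR `γₑ = γ/(Nσ²γ+1)`, the determinants evaluate to
`(1+ρ)^N` and `(1+ρ/(ρσ²+1))^N`, so the relative capacity loss equals
`1 - log (1 + ρ/(ρσ²+1)) / log (1 + ρ)`, independently of `N`. -/
theorem massive_mimo_relative_capacity_loss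
    (N : ℕ) (hN : 1 ≤ N) (ρ σ2 : ℝ) (hρ : 0 < ρ) (hσ : 0 < σ2)
    (S : Matrix (Fin N) (Fin N) ℂ) (hSdef : S = (N : ℂ) • (1 : Matrix (Fin N) (Fin N) ℂ))
    (γ γe : ℝ) (hγ : γ = ρ / N) (hγe : γe = γ / (N * σ2 * γ + 1)) :
    Matrix.det (1 + (γ : ℂ) • S) = ((1 + ρ : ℝ) : ℂ) ^ N ∧
    Matrix.det (1 + (γe : ℂ) • S) = ((1 + ρ / (ρ * σ2 + 1) : ℝ) : ℂ) ^ N ∧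
    1 - Real.log ((Matrix.det (1 + (γe : ℂ) • S)).re) /
          Real.log ((Matrix.det (1 + (γ : ℂ) • S)).re) =
      1 - Real.log (1 + ρ / (ρ * σ2 + 1)) / Real.log (1 + ρ) := by
  have hN0 : N ≠ 0 := Nat.one_le_iff_ne_zero.mp hN
  have : Nonempty (Fin N) := Fin.pos_iff_nonempty.mp hN
  have hγN : γ * N = ρ := by rw [hγ, div_mul_cancel₀ _ (Nat.cast_ne_zero.mpr hN0)]
  have hγeN : γe * N = ρ / (ρ * σ2 + 1) := by
    rw [hγe, ← equivalentSNR, equivalentSNR_mul, hγN]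
  rw [← Complex.ofReal_natCast] at hSdef
  subst hSdef
  refine ⟨?_, ?_, ?_⟩
  · rw [det_one_add_ofReal_smul_smul_one, hγN, Fintype.card_fin]
  · rw [det_one_add_ofReal_smul_smul_one, hγeN, Fintype.card_fin]
  · rw [← hγeN, ← hγN]
    exact relativeCapacityLoss_smul_one (n := Fin N) N γ γe
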